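/- arXiv:2605.00667 — 3 statements merged into one kernel-verified Lean document; each statement's English description precedes it below -/
import Mathlib

section
/- Under Assumptions 1–3, if the policy space Π is a nonempty, bounded, convex, strongly closed subset of a real Hilbert space, the dual optimal set Ω* = {λ ∈ H₊ : d(λ) ≥ d(μ) for all μ ∈ H₊} is nonempty, and the ALaM iterates are well defined for all k (the argmin defining π^{k+1} exists), then the multiplier sequence {λᵏ} converges weakly in H to some dual optimal solution λ* ∈ Ω*. -/
open MeasureTheory Filter
open scoped RealInnerProductSpace

open scoped Topology

/-!
The multiplier update is a proximal-point step on the dual function `d`: a minimizer of the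
augmented Lagrangian also minimizes the Lagrangian at the *updated* multiplier, so its constraint
value is a supergradient of `d` there, and the positive part is the metric projection onto the cone.
Hence distances to dual optima decrease, and since the penalties have infinite sum, the dual values
converge to the dual optimum. Superlevel sets of `d` are closed and convex, hence weakly closed, so
weak cluster points of the multipliers are optimal, and Opial's lemma gives weak convergence.
-/

section WeakTopology

variable {ι H : Type*} [NormedAddCommGroup H] [InnerProductSpace ℝ H] {l : Filter ι} {u : ι → H}

theorem continuous_inner_toWeakSpace_symm (z : H) :
    Continuous fun x : WeakSpace ℝ H => ⟪(toWeakSpace ℝ H).symm x, z⟫ := by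
  simp only [real_inner_comm z]
  exact WeakBilin.eval_continuous (topDualPairing ℝ H).flip (innerSL ℝ z)

theorem continuous_toWeakSpace_iff_forall_inner [CompleteSpace H] {X : Type*} [TopologicalSpace X]
    {f : X → H} :
    Continuous (fun x => toWeakSpace ℝ H (f x)) ↔ ∀ z, Continuous fun x => ⟪f x, z⟫ := by
  refine ⟨fun hf z => (continuous_inner_toWeakSpace_symm z).comp hf, fun hf =>
    WeakBilin.continuous_of_continuous_eval _ fun φ => ?_⟩
  refine (hf ((InnerProductSpace.toDual ℝ H).symm φ)).congr fun x => ?_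
  rw [real_inner_comm, InnerProductSpace.toDual_symm_apply]
  rfl

theorem isCompact_toWeakSpace_image_closedBall [CompleteSpace H] (R : ℝ) :
    IsCompact (toWeakSpace ℝ H '' Metric.closedBall 0 R) := by
  let riesz (φ : WeakDual ℝ H) : H := (InnerProductSpace.toDual ℝ H).symm (WeakDual.toStrongDual φ)
  have hriesz : Continuous fun φ => toWeakSpace ℝ H (riesz φ) := by
    refine continuous_toWeakSpace_iff_forall_inner.2 fun z => ?_
    simp only [riesz, InnerProductSpace.toDual_symm_apply]
    exact WeakDual.eval_continuous z
  have hball : riesz '' (WeakDual.toStrongDual ⁻¹' Metric.closedBall 0 R) =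
      Metric.closedBall 0 R := by
    change (InnerProductSpace.toDual ℝ H).symm ∘ WeakDual.toStrongDual '' _ = _
    rw [Set.image_comp, Set.image_preimage_eq _ WeakDual.toStrongDual.surjective,
      LinearIsometryEquiv.image_closedBall, map_zero]
  rw [← hball, Set.image_image]
  exact (WeakDual.isCompact_closedBall 0 R).image hriesz

theorem tendsto_inner_of_tendsto_toWeakSpace {a : H}
    (h : Tendsto (fun i => toWeakSpace ℝ H (u i)) l (𝓝 (toWeakSpace ℝ H a))) (z : H) :
    Tendsto (fun i => ⟪u i, z⟫) l (𝓝 ⟪a, z⟫) :=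
  ((continuous_inner_toWeakSpace_symm z).tendsto _).comp h

theorem inner_eq_of_mapClusterPt_toWeakSpace {a z : H} {c : ℝ}
    (ha : MapClusterPt (toWeakSpace ℝ H a) l fun i => toWeakSpace ℝ H (u i))
    (hc : Tendsto (fun i => ⟪u i, z⟫) l (𝓝 c)) : ⟪a, z⟫ = c := by
  have hz : MapClusterPt ⟪a, z⟫ l fun i => ⟪u i, z⟫ :=
    ha.continuousAt_comp (continuous_inner_toWeakSpace_symm z).continuousAt
  exact eq_of_nhds_neBot (hz.clusterPt.mono hc)

theorem isClosed_toWeakSpace_image_of_convex {s : Set H} (hs : Convex ℝ s) (hs' : IsClosed s) :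
    IsClosed (toWeakSpace ℝ H '' s) := by
  rw [← closure_eq_iff_isClosed, ← hs.toWeakSpace_closure ℝ, hs'.closure_eq]

theorem mem_of_mapClusterPt_toWeakSpace {s : Set H} (hs : Convex ℝ s) (hs' : IsClosed s)
    {a : H} (ha : MapClusterPt (toWeakSpace ℝ H a) l fun i => toWeakSpace ℝ H (u i))
    (hu : ∀ᶠ i in l, u i ∈ s) : a ∈ s := by
  have h := (isClosed_toWeakSpace_image_of_convex hs hs').mem_of_mapClusterPt ha
    (hu.mono fun _ => Set.mem_image_of_mem _)
  exact (toWeakSpace ℝ H).injective.mem_set_image.1 h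

theorem tendsto_inner_sub_of_tendsto_norm_sub {a b : H} {α β : ℝ}
    (ha : Tendsto (fun i => ‖u i - a‖) l (𝓝 α)) (hb : Tendsto (fun i => ‖u i - b‖) l (𝓝 β)) :
    Tendsto (fun i => ⟪u i, a - b⟫) l
      (𝓝 ((β ^ 2 - α ^ 2 + ‖a‖ ^ 2 - ‖b‖ ^ 2) / 2)) := by
  refine (((((hb.pow 2).sub (ha.pow 2)).add_const (‖a‖ ^ 2)).sub_const (‖b‖ ^ 2)).div_const
    2).congr fun i => ?_
  rw [norm_sub_sq_real, norm_sub_sq_real, inner_sub_right]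
  ring

theorem eq_of_mapClusterPt_toWeakSpace_of_tendsto_norm_sub {a b : H} {α β : ℝ}
    (ha : MapClusterPt (toWeakSpace ℝ H a) l fun i => toWeakSpace ℝ H (u i))
    (hb : MapClusterPt (toWeakSpace ℝ H b) l fun i => toWeakSpace ℝ H (u i))
    (hα : Tendsto (fun i => ‖u i - a‖) l (𝓝 α)) (hβ : Tendsto (fun i => ‖u i - b‖) l (𝓝 β)) :
    a = b := by
  have hab := tendsto_inner_sub_of_tendsto_norm_sub hα hβ
  rw [← sub_eq_zero, ← inner_self_eq_zero (𝕜 := ℝ), inner_sub_left,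
    inner_eq_of_mapClusterPt_toWeakSpace ha hab, inner_eq_of_mapClusterPt_toWeakSpace hb hab,
    sub_self]

theorem exists_tendsto_toWeakSpace_of_tendsto_norm_sub [CompleteSpace H] [l.NeBot] {S : Set H}
    (hS : S.Nonempty) (hnorm : ∀ s ∈ S, ∃ c, Tendsto (fun i => ‖u i - s‖) l (𝓝 c))
    (hclus : ∀ a, MapClusterPt (toWeakSpace ℝ H a) l (fun i => toWeakSpace ℝ H (u i)) → a ∈ S) :
    ∃ a ∈ S, Tendsto (fun i => toWeakSpace ℝ H (u i)) l (𝓝 (toWeakSpace ℝ H a)) := by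
  obtain ⟨s, hs⟩ := hS
  obtain ⟨c, hc⟩ := hnorm s hs
  obtain ⟨R, hR⟩ := (hc.add_const ‖s‖).isBoundedUnder_le
  have hball : ∀ᶠ i in l, toWeakSpace ℝ H (u i) ∈ toWeakSpace ℝ H '' Metric.closedBall 0 R := by
    filter_upwards [hR] with i hi
    refine Set.mem_image_of_mem _ (mem_closedBall_zero_iff.2 (le_trans ?_ hi))
    simpa only [sub_add_cancel] using norm_add_le (u i - s) s
  have hcompact := isCompact_toWeakSpace_image_closedBall (H := H) R
  obtain ⟨_, ⟨a, -, rfl⟩, ha⟩ := hcompact.exists_mapClusterPt_of_frequently hball.frequently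
  refine ⟨a, hclus a ha, hcompact.tendsto_nhds_of_unique_mapClusterPt hball ?_⟩
  rintro _ ⟨b, -, rfl⟩ hb
  obtain ⟨α, hα⟩ := hnorm a (hclus a ha)
  obtain ⟨β, hβ⟩ := hnorm b (hclus b hb)
  rw [eq_of_mapClusterPt_toWeakSpace_of_tendsto_norm_sub hb ha hβ hα]

end WeakTopology

section ProximalPoint

variable {H : Type*} [NormedAddCommGroup H] [InnerProductSpace ℝ H]

/-- `y` is the proximal point `argmax_{z ∈ K} g z - ‖z - x‖² / (2 r)`, encoded by the variational
inequality that characterizes it when `g` is concave on the convex set `K`. -/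
structure IsProximalPoint (g : H → ℝ) (K : Set H) (r : ℝ) (x y : H) : Prop where
  mem : y ∈ K
  inner_le : ∀ z ∈ K, ⟪x - y, z - y⟫ ≤ r * (g y - g z)

namespace IsProximalPoint

variable {g : H → ℝ} {K : Set H} {r : ℝ} {x y z : H}

theorem two_mul_mul_sub_add_norm_sub_sq_le (h : IsProximalPoint g K r x y) (hz : z ∈ K) :
    2 * (r * (g z - g y)) + ‖x - y‖ ^ 2 ≤ ‖x - z‖ ^ 2 - ‖y - z‖ ^ 2 := by
  have hinner := h.inner_le z hz
  have hsq := norm_sub_sq_real (x - y) (z - y)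
  rw [sub_sub_sub_cancel_right, norm_sub_rev z y] at hsq
  linarith

theorem two_mul_mul_sub_le (h : IsProximalPoint g K r x y) (hz : z ∈ K) :
    2 * (r * (g z - g y)) ≤ ‖x - z‖ ^ 2 - ‖y - z‖ ^ 2 := by
  linarith [h.two_mul_mul_sub_add_norm_sub_sq_le hz, sq_nonneg ‖x - y‖]

theorem apply_le_apply (h : IsProximalPoint g K r x y) (hr : 0 < r) (hx : x ∈ K) : g x ≤ g y := by
  have hxy := h.inner_le x hx
  exact sub_nonneg.1 (nonneg_of_mul_nonneg_right (real_inner_self_nonneg.trans hxy) hr)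

theorem norm_sub_le_of_isMaxOn (h : IsProximalPoint g K r x y) (hr : 0 ≤ r) (hz : z ∈ K)
    (hmax : IsMaxOn g K z) : ‖y - z‖ ≤ ‖x - z‖ := by
  have hgain : 0 ≤ r * (g z - g y) := mul_nonneg hr (sub_nonneg.2 (hmax h.mem))
  refine le_of_sq_le_sq ?_ (norm_nonneg _)
  linarith [h.two_mul_mul_sub_le hz]

end IsProximalPoint

variable {g : H → ℝ} {K : Set H} {r : ℕ → ℝ} {x : ℕ → H} {s : H}

theorem exists_tendsto_norm_sub_of_isProximalPoint
    (hx : ∀ k, IsProximalPoint g K (r k) (x k) (x (k + 1))) (hr : ∀ k, 0 ≤ r k) (hs : s ∈ K)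
    (hmax : IsMaxOn g K s) : ∃ c, Tendsto (fun k => ‖x k - s‖) atTop (𝓝 c) :=
  ⟨_, tendsto_atTop_ciInf
    (antitone_nat_of_succ_le fun k => (hx k).norm_sub_le_of_isMaxOn (hr k) hs hmax)
    ⟨0, Set.forall_mem_range.2 fun _ => norm_nonneg _⟩⟩

theorem two_mul_sum_mul_sub_le_of_isProximalPoint
    (hx : ∀ k, IsProximalPoint g K (r k) (x k) (x (k + 1))) (hr : ∀ k, 0 < r k) (hs : s ∈ K)
    (n : ℕ) :
    2 * ((∑ i ∈ Finset.range n, r i) * (g s - g (x n))) ≤ ‖x 0 - s‖ ^ 2 - ‖x n - s‖ ^ 2 := by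
  induction n with
  | zero => simp
  | succ n ih =>
    have hmono : (∑ i ∈ Finset.range n, r i) * g (x n) ≤
        (∑ i ∈ Finset.range n, r i) * g (x (n + 1)) := by
      -- `x 0` need not lie in `K`, but its weight is the empty sum.
      cases n with
      | zero => simp
      | succ n =>
        exact mul_le_mul_of_nonneg_left ((hx (n + 1)).apply_le_apply (hr _) (hx n).mem)
          (Finset.sum_nonneg fun i _ => (hr i).le)
    rw [Finset.sum_range_succ]
    linarith [(hx n).two_mul_mul_sub_le hs]

theorem eventually_le_apply_of_isProximalPoint
    (hx : ∀ k, IsProximalPoint g K (r k) (x k) (x (k + 1))) (hr : ∀ k, 0 < r k)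
    (hsum : Tendsto (fun n => ∑ i ∈ Finset.range n, r i) atTop atTop) (hs : s ∈ K) {c : ℝ}
    (hc : c < g s) : ∀ᶠ n in atTop, x n ∈ K ∧ c ≤ g (x n) := by
  have hmem : ∀ᶠ n in atTop, x n ∈ K := by
    filter_upwards [eventually_ge_atTop 1] with n hn
    obtain ⟨k, rfl⟩ := Nat.exists_eq_add_of_le' hn
    exact (hx k).mem
  have hlarge : ∀ᶠ n in atTop,
      ‖x 0 - s‖ ^ 2 < 2 * ((∑ i ∈ Finset.range n, r i) * (g s - c)) :=
    ((hsum.atTop_mul_const (sub_pos.2 hc)).const_mul_atTop two_pos).eventually_gt_atTop _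
  filter_upwards [hmem, hlarge] with n hn hlt
  refine ⟨hn, le_of_not_gt fun hgt => ?_⟩
  have hgap : (∑ i ∈ Finset.range n, r i) * (g s - c) ≤
      (∑ i ∈ Finset.range n, r i) * (g s - g (x n)) :=
    mul_le_mul_of_nonneg_left (by linarith) (Finset.sum_nonneg fun i _ => (hr i).le)
  linarith [two_mul_sum_mul_sub_le_of_isProximalPoint hx hr hs n, sq_nonneg ‖x n - s‖]

theorem exists_isMaxOn_tendsto_toWeakSpace_of_isProximalPoint [CompleteSpace H]
    (hg : QuasiconcaveOn ℝ K g) (hclosed : ∀ c, IsClosed {z ∈ K | c ≤ g z})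
    (hx : ∀ k, IsProximalPoint g K (r k) (x k) (x (k + 1))) (hr : ∀ k, 0 < r k)
    (hsum : Tendsto (fun n => ∑ i ∈ Finset.range n, r i) atTop atTop)
    (hmax : ∃ s ∈ K, IsMaxOn g K s) :
    ∃ a ∈ K, IsMaxOn g K a ∧
      Tendsto (fun k => toWeakSpace ℝ H (x k)) atTop (𝓝 (toWeakSpace ℝ H a)) := by
  suffices hclus : ∀ a, MapClusterPt (toWeakSpace ℝ H a) atTop (fun k => toWeakSpace ℝ H (x k)) →
      a ∈ {a ∈ K | IsMaxOn g K a} by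
    obtain ⟨a, ⟨haK, hamax⟩, ha⟩ := exists_tendsto_toWeakSpace_of_tendsto_norm_sub hmax
      (fun s hs => exists_tendsto_norm_sub_of_isProximalPoint hx (fun k => (hr k).le) hs.1 hs.2)
      hclus
    exact ⟨a, haK, hamax, ha⟩
  intro a ha
  obtain ⟨s, hs, hsmax⟩ := hmax
  have hlevel : ∀ c < g s, a ∈ {z ∈ K | c ≤ g z} := fun c hc =>
    mem_of_mapClusterPt_toWeakSpace (hg c) (hclosed c) ha
      (eventually_le_apply_of_isProximalPoint hx hr hsum hs hc)
  have hle : g s ≤ g a := le_of_forall_lt_imp_le_of_dense fun c hc => (hlevel c hc).2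
  exact ⟨(hlevel _ (sub_one_lt (g s))).1, fun z hz => (hsmax hz).trans hle⟩

end ProximalPoint

section HilbertLattice

variable {H : Type*} [NormedAddCommGroup H] [Lattice H] [HasSolidNorm H] [IsOrderedAddMonoid H]

theorem norm_posPart_le_norm_posPart_add {x y h : H} (hxy : x ≤ y + h) : ‖x⁺‖ ≤ ‖y⁺ + h‖ := by
  refine norm_le_norm_of_abs_le_abs ?_
  rw [abs_of_nonneg (posPart_nonneg x)]
  refine sup_le ?_ (abs_nonneg _)
  exact hxy.trans ((add_le_add_left (le_posPart y) h).trans (le_abs_self _))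

variable [InnerProductSpace ℝ H]

theorem inner_posPart_negPart (x : H) : ⟪x⁺, x⁻⟫ = 0 := by
  have hadd := norm_add_sq_real x⁺ x⁻
  rw [posPart_add_negPart, norm_abs_eq_norm] at hadd
  have hsub := norm_sub_sq_real x⁺ x⁻
  rw [posPart_sub_negPart] at hsub
  linarith

theorem real_inner_nonneg_of_nonneg {x y : H} (hx : 0 ≤ x) (hy : 0 ≤ y) : 0 ≤ ⟪x, y⟫ := by
  have habs : |x - y| ≤ |x + y| := by
    rw [abs_of_nonneg (add_nonneg hx hy)]
    refine abs_le'.2 ⟨(sub_le_self x hy).trans (le_add_of_nonneg_right hy), ?_⟩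
    rw [neg_sub]
    exact (sub_le_self y hx).trans (le_add_of_nonneg_left hx)
  have hnorm : ‖x - y‖ ^ 2 ≤ ‖x + y‖ ^ 2 :=
    pow_le_pow_left₀ (norm_nonneg _) (norm_le_norm_of_abs_le_abs habs) 2
  rw [norm_sub_sq_real, norm_add_sq_real] at hnorm
  linarith

theorem nonneg_iff_forall_inner_nonneg {x : H} : 0 ≤ x ↔ ∀ y, 0 ≤ y → 0 ≤ ⟪x, y⟫ := by
  refine ⟨fun hx y => real_inner_nonneg_of_nonneg hx, fun h => negPart_eq_zero.1 ?_⟩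
  have hneg := h x⁻ (negPart_nonneg x)
  rw [← posPart_sub_negPart x, inner_sub_left, posPart_sub_negPart, inner_posPart_negPart, zero_sub,
    neg_nonneg] at hneg
  exact real_inner_self_nonpos.1 hneg

instance (priority := 100) hilbertLattice_posSMulMono : PosSMulMono ℝ H :=
  PosSMulMono.of_smul_nonneg fun c hc x hx => nonneg_iff_forall_inner_nonneg.2 fun y hy => by
    rw [real_inner_smul_left]
    exact mul_nonneg hc (real_inner_nonneg_of_nonneg hx hy)

theorem inner_sub_posPart_sub_posPart_nonpos (x : H) {y : H} (hy : 0 ≤ y) :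
    ⟪x - x⁺, y - x⁺⟫ ≤ 0 := by
  have hx : x - x⁺ = -x⁻ := by rw [sub_eq_iff_eq_add', ← sub_eq_add_neg, posPart_sub_negPart]
  rw [hx, inner_neg_left, inner_sub_right, real_inner_comm x⁺, inner_posPart_negPart, sub_zero,
    neg_nonpos]
  exact real_inner_nonneg_of_nonneg (negPart_nonneg x) hy

end HilbertLattice

section AugmentedLagrangian

variable {E H : Type*} [NormedAddCommGroup H] [InnerProductSpace ℝ H]

/-- The Lagrangian `L(π, m) = -J(π) + ⟪m, F(π)⟫` of maximizing `J` subject to `F ≤ 0`. -/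
def lagrangian (J : E → ℝ) (F : E → H) (π : E) (m : H) : ℝ :=
  -J π + ⟪m, F π⟫

/-- The augmented Lagrangian `L(π, m, r)` with penalty parameter `r`; it is meant for `r > 0`. -/
noncomputable def augmentedLagrangian [Lattice H] (J : E → ℝ) (F : E → H) (π : E) (m : H) (r : ℝ) :
    ℝ :=
  -J π + 1 / (2 * r) * ‖(m + r • F π)⁺‖ ^ 2 - 1 / (2 * r) * ‖m‖ ^ 2

/-- `d` is the dual function of maximizing `J` over `s` subject to `F ≤ 0`. Only its values on the
positive cone are constrained, and there the infimum of the Lagrangian is required to be a real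
number. -/
def IsDualFunction [Preorder H] (s : Set E) (J : E → ℝ) (F : E → H) (d : H → ℝ) : Prop :=
  ∀ m, 0 ≤ m → IsGLB ((fun π => lagrangian J F π m) '' s) (d m)

/-- The pair `(π, m)` is a run of the augmented Lagrangian method with penalty parameters `ρ`. As in
the usual indexing, the first policy is `π 1`, and the value `π 0` is irrelevant. -/
structure IsAugmentedLagrangianIteration [Lattice H] (s : Set E) (J : E → ℝ) (F : E → H)
    (ρ : ℕ → ℝ) (π : ℕ → E) (m : ℕ → H) : Prop where
  mem : ∀ k, π (k + 1) ∈ s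
  isMinOn : ∀ k, IsMinOn (fun p => augmentedLagrangian J F p (m k) (ρ k)) s (π (k + 1))
  update : ∀ k, m (k + 1) = (m k + ρ k • F (π (k + 1)))⁺

variable {s : Set E} {J : E → ℝ} {F : E → H} {d : H → ℝ} {m : H} {p q : E} {r t : ℝ}

theorem isDualFunction_sInf_of_bounded [Preorder H] (hs : s.Nonempty) {MJ MF : ℝ}
    (hJ : ∀ π ∈ s, J π ≤ MJ) (hF : ∀ π ∈ s, ‖F π‖ ≤ MF) :
    IsDualFunction s J F fun m => sInf ((fun π => lagrangian J F π m) '' s) := by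
  refine fun m _ => isGLB_csInf (hs.image _) ⟨-MJ - ‖m‖ * MF, ?_⟩
  rintro _ ⟨π, hπ, rfl⟩
  have hinner : -(‖m‖ * ‖F π‖) ≤ ⟪m, F π⟫ := neg_le_of_abs_le (abs_real_inner_le_norm m (F π))
  have hnorm : ‖m‖ * ‖F π‖ ≤ ‖m‖ * MF := mul_le_mul_of_nonneg_left (hF π hπ) (norm_nonneg m)
  simp only [lagrangian]
  linarith [hJ π hπ]

theorem IsDualFunction.superlevel_eq [Preorder H] (hd : IsDualFunction s J F d) (c : ℝ) :
    {m ∈ Set.Ici 0 | c ≤ d m} = Set.Ici 0 ∩ ⋂ π ∈ s, {m | c + J π ≤ ⟪m, F π⟫} := by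
  ext m
  simp only [Set.mem_ofPred_eq, Set.mem_inter_iff, Set.mem_iInter]
  refine and_congr_right fun hm => ?_
  rw [le_isGLB_iff (hd m hm), mem_lowerBounds, Set.forall_mem_image]
  refine forall₂_congr fun π _ => ?_
  rw [lagrangian, le_neg_add_iff_add_le, add_comm]

variable [Lattice H] [HasSolidNorm H] [IsOrderedAddMonoid H]

theorem IsDualFunction.isProximalPoint_posPart (hd : IsDualFunction s J F d) (hr : 0 ≤ r)
    (hp : p ∈ s) (hmin : IsMinOn (fun π => lagrangian J F π (m + r • F p)⁺) s p) :
    IsProximalPoint d (Set.Ici 0) r m (m + r • F p)⁺ := by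
  have hnonneg := posPart_nonneg (m + r • F p)
  refine ⟨hnonneg, fun z hz => ?_⟩
  have hproj := inner_sub_posPart_sub_posPart_nonpos (m + r • F p) hz
  set y := (m + r • F p)⁺
  have hdz : d z ≤ -J p + ⟪z, F p⟫ := (hd z hz).1 (Set.mem_image_of_mem _ hp)
  have hdy : -J p + ⟪y, F p⟫ ≤ d y := (hd y hnonneg).2 (Set.forall_mem_image.2 hmin)
  have hgain : r * (d z - d y) ≤ r * ⟪F p, z - y⟫ := by
    refine mul_le_mul_of_nonneg_left ?_ hr
    rw [real_inner_comm, inner_sub_left]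
    linarith
  rw [add_sub_right_comm, inner_add_left, real_inner_smul_left] at hproj
  linarith

theorem IsDualFunction.quasiconcaveOn (hd : IsDualFunction s J F d) :
    QuasiconcaveOn ℝ (Set.Ici 0) d := fun c => by
  rw [hd.superlevel_eq]
  refine (convex_Ici 0).inter (convex_iInter₂ fun π _ => ?_)
  exact convex_halfSpace_ge
    ⟨fun x y => inner_add_left x y _, fun a x => real_inner_smul_left x _ a⟩ _

theorem IsDualFunction.isClosed_superlevel (hd : IsDualFunction s J F d) (c : ℝ) :
    IsClosed {m ∈ Set.Ici 0 | c ≤ d m} := by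
  rw [hd.superlevel_eq]
  exact isClosed_Ici.inter (isClosed_biInter fun π _ => isClosed_le (by fun_prop) (by fun_prop))

variable [AddCommGroup E] [Module ℝ E]

theorem norm_posPart_add_smul_segment_sq_le (hF : ConvexOn ℝ s F) (hr : 0 ≤ r) (hp : p ∈ s)
    (hq : q ∈ s) (ht : 0 ≤ t) (ht' : t ≤ 1) :
    ‖(m + r • F (t • q + (1 - t) • p))⁺‖ ^ 2 ≤ ‖(m + r • F p)⁺‖ ^ 2 +
      2 * (r * t * ⟪(m + r • F p)⁺, F q - F p⟫) + (r * t) ^ 2 * ‖F q - F p‖ ^ 2 := by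
  have hconv : m + r • F (t • q + (1 - t) • p) ≤ m + r • F p + (r * t) • (F q - F p) := by
    have hseg := hF.2 hq hp ht (sub_nonneg.2 ht') (add_sub_cancel t 1)
    calc m + r • F (t • q + (1 - t) • p)
        ≤ m + r • (t • F q + (1 - t) • F p) :=
          add_le_add_right (smul_le_smul_of_nonneg_left hseg hr) m
      _ = m + r • F p + (r * t) • (F q - F p) := by module
  calc ‖(m + r • F (t • q + (1 - t) • p))⁺‖ ^ 2
      ≤ ‖(m + r • F p)⁺ + (r * t) • (F q - F p)‖ ^ 2 :=
        pow_le_pow_left₀ (norm_nonneg _) (norm_posPart_le_norm_posPart_add hconv) 2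
    _ = _ := by
        rw [norm_add_sq_real, real_inner_smul_right, norm_smul, mul_pow, Real.norm_eq_abs, sq_abs]

theorem sub_le_inner_add_mul_of_isMinOn_augmentedLagrangian (hJ : ConcaveOn ℝ s J)
    (hF : ConvexOn ℝ s F) (hr : 0 < r) (hp : p ∈ s)
    (hmin : IsMinOn (fun π => augmentedLagrangian J F π m r) s p) (hq : q ∈ s) (ht : 0 < t)
    (ht' : t ≤ 1) :
    J q - J p ≤ ⟪(m + r • F p)⁺, F q - F p⟫ + t * (r / 2 * ‖F q - F p‖ ^ 2) := by
  have hJseg : t * J q + (1 - t) * J p ≤ J (t • q + (1 - t) • p) :=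
    hJ.2 hq hp ht.le (sub_nonneg.2 ht') (add_sub_cancel t 1)
  have hopt : augmentedLagrangian J F p m r ≤ augmentedLagrangian J F (t • q + (1 - t) • p) m r :=
    hmin (hJ.1 hq hp ht.le (sub_nonneg.2 ht') (add_sub_cancel t 1))
  have hpenalty := mul_le_mul_of_nonneg_left
    (norm_posPart_add_smul_segment_sq_le (m := m) hF hr.le hp hq ht.le ht')
    (by positivity : 0 ≤ 1 / (2 * r))
  have hexpand (a b c : ℝ) : 1 / (2 * r) * (a + 2 * (r * t * b) + (r * t) ^ 2 * c) =
      1 / (2 * r) * a + t * (b + t * (r / 2 * c)) := by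
    field_simp
    ring
  rw [hexpand] at hpenalty
  simp only [augmentedLagrangian] at hopt
  refine le_of_mul_le_mul_left ?_ ht
  linarith

theorem isMinOn_lagrangian_of_isMinOn_augmentedLagrangian (hJ : ConcaveOn ℝ s J)
    (hF : ConvexOn ℝ s F) (hr : 0 < r) (hp : p ∈ s)
    (hmin : IsMinOn (fun π => augmentedLagrangian J F π m r) s p) :
    IsMinOn (fun π => lagrangian J F π (m + r • F p)⁺) s p := by
  intro q hq
  set y := (m + r • F p)⁺
  have hlim : Tendsto (fun t : ℝ => ⟪y, F q - F p⟫ + t * (r / 2 * ‖F q - F p‖ ^ 2)) (𝓝[>] 0)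
      (𝓝 ⟪y, F q - F p⟫) := by
    refine tendsto_nhdsWithin_of_tendsto_nhds (Continuous.tendsto' (by fun_prop) _ _ ?_)
    rw [zero_mul, add_zero]
  have hfirst : J q - J p ≤ ⟪y, F q - F p⟫ := by
    refine ge_of_tendsto hlim ?_
    filter_upwards [Ioc_mem_nhdsGT one_pos] with t ht
    exact sub_le_inner_add_mul_of_isMinOn_augmentedLagrangian hJ hF hr hp hmin hq ht.1 ht.2
  rw [inner_sub_right] at hfirst
  simp only [Set.mem_ofPred_eq, lagrangian]
  linarith

theorem IsAugmentedLagrangianIteration.isProximalPoint {ρ : ℕ → ℝ} {π : ℕ → E} {m : ℕ → H}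
    (h : IsAugmentedLagrangianIteration s J F ρ π m) (hJ : ConcaveOn ℝ s J) (hF : ConvexOn ℝ s F)
    (hd : IsDualFunction s J F d) (hρ : ∀ k, 0 < ρ k) (k : ℕ) :
    IsProximalPoint d (Set.Ici 0) (ρ k) (m k) (m (k + 1)) := by
  rw [h.update]
  exact hd.isProximalPoint_posPart (hρ k).le (h.mem k)
    (isMinOn_lagrangian_of_isMinOn_augmentedLagrangian hJ hF (hρ k) (h.mem k) (h.isMinOn k))

theorem stmt_0_general [CompleteSpace H] {ρ : ℕ → ℝ} {π : ℕ → E} {m : ℕ → H}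
    (hJ : ConcaveOn ℝ s J) (hF : ConvexOn ℝ s F) (hd : IsDualFunction s J F d)
    (hopt : ∃ a, 0 ≤ a ∧ ∀ b, 0 ≤ b → d b ≤ d a) (hρ : ∀ k, 0 < ρ k)
    (hsum : Tendsto (fun n => ∑ k ∈ Finset.range n, ρ k) atTop atTop)
    (h : IsAugmentedLagrangianIteration s J F ρ π m) :
    ∃ a, 0 ≤ a ∧ (∀ b, 0 ≤ b → d b ≤ d a) ∧
      ∀ z, Tendsto (fun k => ⟪m k, z⟫) atTop (𝓝 ⟪a, z⟫) := by
  obtain ⟨a, ha, hmax, hlim⟩ := exists_isMaxOn_tendsto_toWeakSpace_of_isProximalPoint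
    hd.quasiconcaveOn hd.isClosed_superlevel (h.isProximalPoint hJ hF hd hρ) hρ hsum hopt
  exact ⟨a, ha, hmax, tendsto_inner_of_tendsto_toWeakSpace hlim⟩

end AugmentedLagrangian

section Lp

variable {α : Type*} [MeasurableSpace α] {μ : Measure α} {p : ENNReal}

theorem Lp_posPart_eq_posPart (f : Lp ℝ p μ) : Lp.posPart f = f⁺ := by
  ext1
  filter_upwards [Lp.coeFn_posPart f, Lp.coeFn_sup f 0, Lp.coeFn_zero ℝ p μ] with x hpos hsup hzero
  rw [hpos, posPart_def, hsup, Pi.sup_apply, hzero, Pi.zero_apply]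

theorem convexOn_Lp_of_ae_le {E : Type*} [AddCommGroup E] [Module ℝ E] {s : Set E}
    {F : E → Lp ℝ p μ} (hs : Convex ℝ s)
    (hF : ∀ π₁ ∈ s, ∀ π₂ ∈ s, ∀ t : ℝ, 0 ≤ t → t ≤ 1 →
      ∀ᵐ x ∂μ, F (t • π₁ + (1 - t) • π₂) x ≤ t * F π₁ x + (1 - t) * F π₂ x) :
    ConvexOn ℝ s F := by
  refine ⟨hs, fun π₁ h₁ π₂ h₂ t u ht hu htu => ?_⟩
  obtain rfl : u = 1 - t := eq_sub_of_add_eq' htu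
  rw [← Lp.coeFn_le]
  filter_upwards [hF π₁ h₁ π₂ h₂ t ht (sub_nonneg.1 hu),
    Lp.coeFn_add (t • F π₁) ((1 - t) • F π₂), Lp.coeFn_smul t (F π₁),
    Lp.coeFn_smul (1 - t) (F π₂)] with x hx hadd hsmul₁ hsmul₂
  rwa [hadd, Pi.add_apply, hsmul₁, hsmul₂]

end Lp

theorem tendsto_sum_range_atTop_of_forall_le {ρ : ℕ → ℝ} {c : ℝ} (hc : 0 < c)
    (hρ : ∀ k, c ≤ ρ k) : Tendsto (fun n => ∑ k ∈ Finset.range n, ρ k) atTop atTop := by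
  refine tendsto_atTop_mono (fun n => ?_) (tendsto_natCast_atTop_atTop.atTop_mul_const hc)
  simpa only [Finset.card_range, nsmul_eq_mul] using
    Finset.card_nsmul_le_sum (Finset.range n) ρ c fun k _ => hρ k

/-- under Assumptions 1–3, with `Π` a nonempty, bounded, convex, strongly
closed subset of a real Hilbert space, a nonempty dual optimal set
`Ω* = {λ ∈ H₊ : d(λ) ≥ d(m) ∀ m ∈ H₊}`, and well-defined ALaM iterates
(`π^{k+1} ∈ argmin_Π L(·, λᵏ, ρᵏ)`, `λ^{k+1} = max{0, λᵏ + ρᵏ F(π^{k+1})}`,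
`0 < ρ₀ ≤ ρᵏ ≤ ρ_max`), the multiplier sequence `{λᵏ}` converges weakly in `H = L²(μ)` to
some dual optimal solution `λ* ∈ Ω*`. -/
theorem stmt_0 {α : Type*} [MeasurableSpace α] {μ : Measure α}
    {E : Type*} [NormedAddCommGroup E] [InnerProductSpace ℝ E] [CompleteSpace E]
    (Pi : Set E) (J : E → ℝ) (F : E → Lp ℝ 2 μ)
    -- `Π` nonempty, bounded, convex, strongly closed
    (hne : Pi.Nonempty) (hbdd : Bornology.IsBounded Pi) (hPiconv : Convex ℝ Pi)
    (hclosed : IsClosed Pi)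
    -- Assumption 1 (boundedness)
    (MJ MF : ℝ) (hMJ : ∀ π ∈ Pi, |J π| ≤ MJ) (hMF : ∀ π ∈ Pi, ‖F π‖ ≤ MF)
    -- Assumption 2 (strong continuity along weakly convergent sequences)
    (hcont : ∀ (πseq : ℕ → E) (π : E), (∀ n, πseq n ∈ Pi) → π ∈ Pi →
      (∀ z : E, Tendsto (fun n => ⟪πseq n, z⟫) atTop (nhds ⟪π, z⟫)) →
      Tendsto (fun n => J (πseq n)) atTop (nhds (J π)) ∧
        Tendsto (fun n => ‖F (πseq n) - F π‖) atTop (nhds 0))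
    -- Assumption 3 (convexity)
    (hJconc : ∀ π₁ ∈ Pi, ∀ π₂ ∈ Pi, ∀ t : ℝ, 0 ≤ t → t ≤ 1 →
      t * J π₁ + (1 - t) * J π₂ ≤ J (t • π₁ + (1 - t) • π₂))
    (hFconv : ∀ π₁ ∈ Pi, ∀ π₂ ∈ Pi, ∀ t : ℝ, 0 ≤ t → t ≤ 1 →
      ∀ᵐ x ∂μ, F (t • π₁ + (1 - t) • π₂) x ≤ t * F π₁ x + (1 - t) * F π₂ x)
    -- dual function
    (d : Lp ℝ 2 μ → ℝ)
    (hd : ∀ lam : Lp ℝ 2 μ, d lam = sInf ((fun π => -J π + ⟪lam, F π⟫) '' Pi))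
    -- the dual optimal set `Ω*` is nonempty
    (hdualopt : ∃ lam : Lp ℝ 2 μ, (0 ≤ᵐ[μ] ⇑lam) ∧
      ∀ m : Lp ℝ 2 μ, (0 ≤ᵐ[μ] ⇑m) → d m ≤ d lam)
    -- ALaM iterates
    (lam : ℕ → Lp ℝ 2 μ) (πseq : ℕ → E) (ρ : ℕ → ℝ) (ρ₀ ρmax : ℝ)
    (hρ₀ : 0 < ρ₀) (hρ : ∀ k, ρ₀ ≤ ρ k ∧ ρ k ≤ ρmax)
    (hlam0 : 0 ≤ᵐ[μ] ⇑(lam 0))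
    (hπPi : ∀ k : ℕ, πseq (k + 1) ∈ Pi)
    (hπmin : ∀ k : ℕ, ∀ π ∈ Pi,
      -J (πseq (k + 1))
          + 1 / (2 * ρ k) * ‖Lp.posPart (lam k + ρ k • F (πseq (k + 1)))‖ ^ 2
          - 1 / (2 * ρ k) * ‖lam k‖ ^ 2
        ≤ -J π + 1 / (2 * ρ k) * ‖Lp.posPart (lam k + ρ k • F π)‖ ^ 2
          - 1 / (2 * ρ k) * ‖lam k‖ ^ 2)
    (hlamupd : ∀ k : ℕ, lam (k + 1) = Lp.posPart (lam k + ρ k • F (πseq (k + 1)))) :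
    ∃ lamstar : Lp ℝ 2 μ, (0 ≤ᵐ[μ] ⇑lamstar) ∧
      (∀ m : Lp ℝ 2 μ, (0 ≤ᵐ[μ] ⇑m) → d m ≤ d lamstar) ∧
      ∀ z : Lp ℝ 2 μ, Tendsto (fun k => ⟪lam k, z⟫) atTop (nhds ⟪lamstar, z⟫) := by
  obtain rfl : d = fun m => sInf ((fun π => lagrangian J F π m) '' Pi) := funext hd
  have hJ : ConcaveOn ℝ Pi J := by
    refine ⟨hPiconv, fun π₁ h₁ π₂ h₂ t u ht hu htu => ?_⟩
    obtain rfl : u = 1 - t := eq_sub_of_add_eq' htu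
    exact hJconc π₁ h₁ π₂ h₂ t ht (sub_nonneg.1 hu)
  have hdual := isDualFunction_sInf_of_bounded hne (fun π hπ => (abs_le.1 (hMJ π hπ)).2) hMF
  have hiter : IsAugmentedLagrangianIteration Pi J F ρ πseq lam := by
    simp only [Lp_posPart_eq_posPart] at hπmin hlamupd
    exact ⟨hπPi, hπmin, hlamupd⟩
  simp only [Lp.coeFn_nonneg] at hdualopt ⊢
  exact stmt_0_general hJ (convexOn_Lp_of_ae_le hPiconv hFconv) hdual hdualopt
    (fun k => hρ₀.trans_le (hρ k).1)
    (tendsto_sum_range_atTop_of_forall_le hρ₀ fun k => (hρ k).1) hiter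
end

section
/- Let H be a real Hilbert space and T : H → Set H a maximal monotone operator. Suppose the zero set S = {λ ∈ H : 0 ∈ T(λ)} is nonempty, and sequences (λᵏ) in H and (ρᵏ) in ℝ satisfy ρᵏ ≥ ρ₀ > 0 for all k and (λᵏ − λ^{k+1})/ρᵏ ∈ T(λ^{k+1}) for all k ≥ 0. Then (λᵏ) converges weakly to some λ* ∈ S. -/
open Filter
open scoped RealInnerProductSpace

/-!
Every zero `p` of `T` satisfies `‖λᵏ⁺¹ - p‖² + ‖λᵏ - λᵏ⁺¹‖² ≤ ‖λᵏ - p‖²`, by monotonicity of `T`.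
Hence `‖λᵏ - p‖` converges, the steps `λᵏ - λᵏ⁺¹` tend to `0`, and so do the elements
`(λᵏ - λᵏ⁺¹) / ρᵏ` of `T (λᵏ⁺¹)`. Since the graph of a maximal monotone operator is closed under
bounded weak-strong limits, every weak cluster point is a zero of `T`. Opial's lemma concludes:
two weak cluster points `p` and `q` coincide, because convergence of `‖λᵏ - p‖` and `‖λᵏ - q‖`
forces `⟪λᵏ, p - q⟫` to converge.
-/

open Topology

section WeakConvergence

variable {𝕜 E ι : Type*} [RCLike 𝕜] [NormedAddCommGroup E] [InnerProductSpace 𝕜 E]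
  {u v : ι → E} {l l₁ l₂ : Filter ι} {p q : E}

variable (𝕜) in
/-- Weak convergence of `u` to `p` along the filter `l` in an inner product space, tested against
vectors rather than continuous functionals; on a Hilbert space the two agree by Riesz
representation. -/
def TendstoWeakly (u : ι → E) (l : Filter ι) (p : E) : Prop :=
  ∀ z, Tendsto (fun k => inner 𝕜 (u k) z) l (𝓝 (inner 𝕜 p z))

theorem TendstoWeakly.tendsto_inner (hu : TendstoWeakly 𝕜 u l p)
    (hbdd : l.IsBoundedUnder (· ≤ ·) (fun k => ‖u k‖)) (hv : Tendsto v l (𝓝 q)) :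
    Tendsto (fun k => inner 𝕜 (u k) (v k)) l (𝓝 (inner 𝕜 p q)) := by
  have hdiff : Tendsto (fun k => inner 𝕜 (u k) (v k - q)) l (𝓝 0) :=
    (tendsto_sub_nhds_zero_iff.2 hv).op_zero_isBoundedUnder_le hbdd
      (fun x y => inner 𝕜 y x) fun x y => (norm_inner_le_norm y x).trans_eq (mul_comm _ _)
  simpa only [inner_sub_right, sub_add_cancel, zero_add] using hdiff.add (hu q)

theorem exists_tendstoWeakly_of_isBoundedUnder_norm [CompleteSpace E] (U : Ultrafilter ι)
    (hbdd : (U : Filter ι).IsBoundedUnder (· ≤ ·) (fun k => ‖u k‖)) :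
    ∃ p, TendstoWeakly 𝕜 u U p := by
  obtain ⟨C, hC⟩ := hbdd
  let f : ι → WeakDual 𝕜 E := fun k => StrongDual.toWeakDual (InnerProductSpace.toDual 𝕜 E (u k))
  have hball : ∀ᶠ k in U,
      f k ∈ WeakDual.toStrongDual ⁻¹' Metric.closedBall (0 : StrongDual 𝕜 E) C := by
    filter_upwards [eventually_map.1 hC] with k hk
    exact mem_closedBall_zero_iff.2 (((InnerProductSpace.toDual 𝕜 E).norm_map (u k)).trans_le hk)
  obtain ⟨φ, -, hφ⟩ := (WeakDual.isCompact_closedBall (𝕜 := 𝕜) (E := E) 0 C).ultrafilter_le_nhds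
    (U.map f) (le_principal_iff.2 hball)
  refine ⟨(InnerProductSpace.toDual 𝕜 E).symm (WeakDual.toStrongDual φ), fun z => ?_⟩
  rw [InnerProductSpace.toDual_symm_apply]
  exact ((WeakDual.eval_continuous z).tendsto φ).comp hφ

theorem isBoundedUnder_norm_of_tendsto_norm_sub {F : Type*} [SeminormedAddCommGroup F]
    {u : ι → F} {p : F} {a : ℝ} (h : Tendsto (fun k => ‖u k - p‖) l (𝓝 a)) :
    l.IsBoundedUnder (· ≤ ·) (fun k => ‖u k‖) :=
  (h.add_const ‖p‖).isBoundedUnder_le.mono_le <| .of_forall fun k => norm_le_norm_sub_add (u k) p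

theorem exists_tendsto_re_inner_sub {a b : ℝ} (hp : Tendsto (fun k => ‖u k - p‖) l (𝓝 a))
    (hq : Tendsto (fun k => ‖u k - q‖) l (𝓝 b)) :
    ∃ c, Tendsto (fun k => RCLike.re (inner 𝕜 (u k) (p - q))) l (𝓝 c) := by
  refine ⟨_, ((((hq.pow 2).sub (hp.pow 2)).add_const (‖p‖ ^ 2 - ‖q‖ ^ 2)).const_mul (1 / 2)).congr
    fun k => ?_⟩
  rw [norm_sub_sq (𝕜 := 𝕜) (u k) q, norm_sub_sq (𝕜 := 𝕜) (u k) p, inner_sub_right, map_sub]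
  ring

theorem TendstoWeakly.eq_of_tendsto_norm_sub [l₁.NeBot] [l₂.NeBot]
    (hup : TendstoWeakly 𝕜 u l₁ p) (huq : TendstoWeakly 𝕜 u l₂ q) (h₁ : l₁ ≤ l) (h₂ : l₂ ≤ l)
    {a b : ℝ} (hp : Tendsto (fun k => ‖u k - p‖) l (𝓝 a))
    (hq : Tendsto (fun k => ‖u k - q‖) l (𝓝 b)) : p = q := by
  obtain ⟨c, hc⟩ := exists_tendsto_re_inner_sub (𝕜 := 𝕜) hp hq
  have hpc : RCLike.re (inner 𝕜 p (p - q)) = c :=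
    tendsto_nhds_unique ((RCLike.continuous_re.tendsto _).comp (hup (p - q))) (hc.mono_left h₁)
  have hqc : RCLike.re (inner 𝕜 q (p - q)) = c :=
    tendsto_nhds_unique ((RCLike.continuous_re.tendsto _).comp (huq (p - q))) (hc.mono_left h₂)
  have hself : RCLike.re (inner 𝕜 (p - q) (p - q)) = 0 := by
    rw [inner_sub_left, map_sub, hpc, hqc, sub_self]
  exact sub_eq_zero.1 (re_inner_self_nonpos.1 hself.le)

/-- Opial's lemma. The ultrafilters finer than `l` pick out the weak cluster points of `u`. -/
theorem exists_tendstoWeakly_of_forall_exists_tendsto_norm_sub [CompleteSpace E] [l.NeBot]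
    {S : Set E} (hS : S.Nonempty)
    (hnorm : ∀ p ∈ S, ∃ a, Tendsto (fun k => ‖u k - p‖) l (𝓝 a))
    (hcluster : ∀ U : Ultrafilter ι, ↑U ≤ l → ∀ p, TendstoWeakly 𝕜 u U p → p ∈ S) :
    ∃ p ∈ S, TendstoWeakly 𝕜 u l p := by
  obtain ⟨s, hs⟩ := hS
  obtain ⟨d, hd⟩ := hnorm s hs
  have hlim : ∀ U : Ultrafilter ι, ↑U ≤ l → ∃ p ∈ S, TendstoWeakly 𝕜 u U p := fun U hU =>
    have ⟨p, hp⟩ := exists_tendstoWeakly_of_isBoundedUnder_norm U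
      (isBoundedUnder_norm_of_tendsto_norm_sub (hd.mono_left hU))
    ⟨p, hcluster U hU p hp, hp⟩
  obtain ⟨U, hU⟩ := Ultrafilter.exists_le l
  obtain ⟨p, hpS, hp⟩ := hlim U hU
  refine ⟨p, hpS, fun z => (tendsto_iff_ultrafilter _ _ _).2 fun V hV => ?_⟩
  obtain ⟨q, hqS, hq⟩ := hlim V hV
  obtain ⟨a, ha⟩ := hnorm p hpS
  obtain ⟨b, hb⟩ := hnorm q hqS
  rw [hp.eq_of_tendsto_norm_sub hq hU hV ha hb]
  exact hq z

end WeakConvergence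

section MonotoneOperator

variable {E ι : Type*} [NormedAddCommGroup E] [InnerProductSpace ℝ E] {T : E → Set E}

/-- A set-valued operator on a real inner product space is monotone if any two points
`(x₁, y₁)` and `(x₂, y₂)` of its graph satisfy `0 ≤ ⟪y₁ - y₂, x₁ - x₂⟫`. -/
def IsMonotoneOperator (T : E → Set E) : Prop :=
  ∀ ⦃x₁ x₂ y₁ y₂ : E⦄, y₁ ∈ T x₁ → y₂ ∈ T x₂ → 0 ≤ ⟪y₁ - y₂, x₁ - x₂⟫

/-- A monotone operator is maximal if its graph contains every point that is monotonically related
to all of the graph. -/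
structure IsMaximalMonotone (T : E → Set E) : Prop where
  isMonotoneOperator : IsMonotoneOperator T
  mem_of_forall_inner_nonneg :
    ∀ x y : E, (∀ x' y' : E, y' ∈ T x' → 0 ≤ ⟪y - y', x - x'⟫) → y ∈ T x

theorem IsMaximalMonotone.mem_of_tendstoWeakly (hT : IsMaximalMonotone T) {l : Filter ι} [l.NeBot]
    {u v : ι → E} {x y : E} (hmem : ∀ᶠ k in l, v k ∈ T (u k)) (hu : TendstoWeakly ℝ u l x)
    (hbdd : l.IsBoundedUnder (· ≤ ·) (fun k => ‖u k‖)) (hv : Tendsto v l (𝓝 y)) : y ∈ T x := by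
  refine hT.mem_of_forall_inner_nonneg x y fun x' y' hy' => ?_
  have hlim : Tendsto (fun k => ⟪v k - y', u k - x'⟫) l (𝓝 ⟪y - y', x - x'⟫) := by
    have hv' : Tendsto (fun k => v k - y') l (𝓝 (y - y')) := hv.sub_const y'
    simpa only [← inner_sub_left, real_inner_comm] using
      (hu.tendsto_inner hbdd hv').sub ((tendsto_const_nhds (x := x')).inner hv')
  exact ge_of_tendsto hlim (hmem.mono fun k hk => hT.isMonotoneOperator hk hy')

theorem IsMonotoneOperator.norm_sub_sq_add_norm_sub_sq_le (hT : IsMonotoneOperator T)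
    {x x' p : E} {r : ℝ} (hr : 0 < r) (hx' : r⁻¹ • (x - x') ∈ T x') (hp : 0 ∈ T p) :
    ‖x' - p‖ ^ 2 + ‖x - x'‖ ^ 2 ≤ ‖x - p‖ ^ 2 := by
  have hinner : 0 ≤ ⟪x - x', x' - p⟫ := by
    have h := hT hx' hp
    rw [sub_zero, real_inner_smul_left] at h
    exact nonneg_of_mul_nonneg_right h (inv_pos.2 hr)
  have hexpand := norm_add_sq_real (x - x') (x' - p)
  rw [sub_add_sub_cancel] at hexpand
  linarith

end MonotoneOperator

section ProximalPoint

variable {E : Type*} [NormedAddCommGroup E] [InnerProductSpace ℝ E] {T : E → Set E}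
  {ρ : ℕ → ℝ} {u : ℕ → E} {p : E}

/-- `u` is a run of the proximal point algorithm for `T` with step sizes `ρ`, that is,
`u (k + 1)` is a value of the resolvent `(1 + ρ k • T)⁻¹` at `u k`. The inclusion is divided by
`ρ k`, so this reading requires `ρ k ≠ 0`. -/
def IsProximalPointSequence (T : E → Set E) (ρ : ℕ → ℝ) (u : ℕ → E) : Prop :=
  ∀ k, (ρ k)⁻¹ • (u k - u (k + 1)) ∈ T (u (k + 1))

namespace IsProximalPointSequence

theorem antitone_norm_sub (hu : IsProximalPointSequence T ρ u) (hT : IsMonotoneOperator T)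
    (hρ : ∀ k, 0 < ρ k) (hp : 0 ∈ T p) : Antitone (fun k => ‖u k - p‖) :=
  antitone_nat_of_succ_le fun k => le_of_sq_le_sq
    ((le_add_of_nonneg_right (sq_nonneg _)).trans
      (hT.norm_sub_sq_add_norm_sub_sq_le (hρ k) (hu k) hp))
    (norm_nonneg _)

theorem exists_tendsto_norm_sub (hu : IsProximalPointSequence T ρ u) (hT : IsMonotoneOperator T)
    (hρ : ∀ k, 0 < ρ k) (hp : 0 ∈ T p) : ∃ a, Tendsto (fun k => ‖u k - p‖) atTop (𝓝 a) :=
  ⟨_, tendsto_atTop_ciInf (hu.antitone_norm_sub hT hρ hp)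
    ⟨0, Set.forall_mem_range.2 fun _ => norm_nonneg _⟩⟩

theorem tendsto_sub_succ (hu : IsProximalPointSequence T ρ u) (hT : IsMonotoneOperator T)
    (hρ : ∀ k, 0 < ρ k) (hp : 0 ∈ T p) : Tendsto (fun k => u k - u (k + 1)) atTop (𝓝 0) := by
  obtain ⟨a, ha⟩ := hu.exists_tendsto_norm_sub hT hρ hp
  have hgap : Tendsto (fun k => ‖u k - p‖ ^ 2 - ‖u (k + 1) - p‖ ^ 2) atTop (𝓝 0) := by
    simpa only [sub_self] using (ha.pow 2).sub (((tendsto_add_atTop_iff_nat 1).2 ha).pow 2)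
  have hsq : Tendsto (fun k => ‖u k - u (k + 1)‖ ^ 2) atTop (𝓝 0) :=
    squeeze_zero (fun _ => sq_nonneg _) (fun k => le_sub_iff_add_le'.2
      (hT.norm_sub_sq_add_norm_sub_sq_le (hρ k) (hu k) hp)) hgap
  exact tendsto_zero_iff_norm_tendsto_zero.2
    (by simpa only [Real.sqrt_sq (norm_nonneg _), Real.sqrt_zero] using hsq.sqrt)

theorem tendsto_inv_smul_sub_succ (hu : IsProximalPointSequence T ρ u) (hT : IsMonotoneOperator T)
    {ρ₀ : ℝ} (hρ₀ : 0 < ρ₀) (hρ : ∀ k, ρ₀ ≤ ρ k) (hp : 0 ∈ T p) :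
    Tendsto (fun k => (ρ k)⁻¹ • (u k - u (k + 1))) atTop (𝓝 0) := by
  have hρpos : ∀ k, 0 < ρ k := fun k => hρ₀.trans_le (hρ k)
  refine IsBoundedUnder.smul_tendsto_zero ?_ (hu.tendsto_sub_succ hT hρpos hp)
  refine isBoundedUnder_of ⟨ρ₀⁻¹, fun k => ?_⟩
  rw [Function.comp_apply, Real.norm_of_nonneg (inv_pos.2 (hρpos k)).le]
  exact inv_anti₀ hρ₀ (hρ k)

end IsProximalPointSequence

end ProximalPoint

/-- proximal-point iteration for a maximal monotone operator `T` on a real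
Hilbert space, with penalty parameters bounded away from zero, converges weakly to a zero
of `T`, provided the zero set is nonempty. -/
theorem stmt_5 {H : Type*} [NormedAddCommGroup H] [InnerProductSpace ℝ H] [CompleteSpace H]
    (T : H → Set H)
    (hmono : ∀ ⦃l₁ l₂ y₁ y₂ : H⦄, y₁ ∈ T l₁ → y₂ ∈ T l₂ → 0 ≤ ⟪y₁ - y₂, l₁ - l₂⟫)
    (hmax : ∀ l y : H, (∀ l' y' : H, y' ∈ T l' → 0 ≤ ⟪y - y', l - l'⟫) → y ∈ T l)
    (hS : ∃ l : H, 0 ∈ T l)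
    (lam : ℕ → H) (ρ : ℕ → ℝ) (ρ₀ : ℝ) (hρ₀ : 0 < ρ₀) (hρ : ∀ k, ρ₀ ≤ ρ k)
    (hiter : ∀ k : ℕ, (ρ k)⁻¹ • (lam k - lam (k + 1)) ∈ T (lam (k + 1))) :
    ∃ lamstar : H, 0 ∈ T lamstar ∧
      ∀ z : H, Tendsto (fun k => ⟪lam k, z⟫) atTop (nhds ⟪lamstar, z⟫) := by
  have hT : IsMaximalMonotone T := ⟨hmono, hmax⟩
  have hlam : IsProximalPointSequence T ρ lam := hiter
  have hnorm : ∀ p, 0 ∈ T p → ∃ a, Tendsto (fun k => ‖lam (k + 1) - p‖) atTop (𝓝 a) := fun p hp =>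
    have ⟨a, ha⟩ := hlam.exists_tendsto_norm_sub hmono (fun k => hρ₀.trans_le (hρ k)) hp
    ⟨a, (tendsto_add_atTop_iff_nat 1).2 ha⟩
  have hcluster : ∀ U : Ultrafilter ℕ, ↑U ≤ (atTop : Filter ℕ) → ∀ p,
      TendstoWeakly ℝ (fun k => lam (k + 1)) U p → 0 ∈ T p := by
    intro U hU p hp
    obtain ⟨s, hs⟩ := hS
    obtain ⟨a, ha⟩ := hnorm s hs
    exact hT.mem_of_tendstoWeakly (.of_forall hiter) hp
      (isBoundedUnder_norm_of_tendsto_norm_sub (ha.mono_left hU))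
      ((hlam.tendsto_inv_smul_sub_succ hmono hρ₀ hρ hs).mono_left hU)
  obtain ⟨p, hpT, hp⟩ :=
    exists_tendstoWeakly_of_forall_exists_tendsto_norm_sub (S := {p | 0 ∈ T p}) hS hnorm hcluster
  exact ⟨p, hpT, fun z => (tendsto_add_atTop_iff_nat 1).1 (hp z)⟩
end

section
/- Let H be a real Hilbert space and T : H → Set H a monotone operator. Suppose λ̂ ∈ H satisfies 0 ∈ T(λ̂), and sequences (λᵏ) in H and (ρᵏ) in ℝ satisfy ρᵏ > 0 and (λᵏ − λ^{k+1})/ρᵏ ∈ T(λ^{k+1}) for all k ≥ 0. Then for every k, ‖λ^{k+1} − λ̂‖² ≤ ‖λᵏ − λ̂‖² − ‖λᵏ − λ^{k+1}‖²; consequently the sequence (‖λᵏ − λ̂‖) is nonincreasing, ∑_{k=0}^∞ ‖λᵏ − λ^{k+1}‖² ≤ ‖λ⁰ − λ̂‖², and ‖λᵏ − λ^{k+1}‖ → 0. -/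
open Filter
open scoped RealInnerProductSpace

/-!
For a zero `z` of `T`, monotonicity says that the step `x - y` from an iterate `x` to the next
iterate `y` makes a nonnegative inner product with `y - z`. Expanding `‖(x - y) + (y - z)‖ ^ 2`
then shows that the squared distance to `z` drops by at least the squared step length, and these
drops telescope.
-/

section Telescoping

variable {G : Type*} [AddCommGroup G] [PartialOrder G] [IsOrderedAddMonoid G]

theorem sum_range_le_sub_of_succ_le_sub {a d : ℕ → G} (h : ∀ k, a (k + 1) ≤ a k - d k) (n : ℕ) :
    ∑ k ∈ Finset.range n, d k ≤ a 0 - a n :=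
  calc
    ∑ k ∈ Finset.range n, d k ≤ ∑ k ∈ Finset.range n, (a k - a (k + 1)) :=
      Finset.sum_le_sum fun k _ => le_sub_comm.mp (h k)
    _ = a 0 - a n := Finset.sum_range_sub' a n

theorem sum_range_le_of_succ_le_sub {a d : ℕ → G} (ha : ∀ k, 0 ≤ a k)
    (h : ∀ k, a (k + 1) ≤ a k - d k) (n : ℕ) : ∑ k ∈ Finset.range n, d k ≤ a 0 :=
  (sum_range_le_sub_of_succ_le_sub h n).trans (sub_le_self _ (ha n))

theorem summable_of_succ_le_sub {a d : ℕ → ℝ} (ha : ∀ k, 0 ≤ a k) (hd : ∀ k, 0 ≤ d k)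
    (h : ∀ k, a (k + 1) ≤ a k - d k) : Summable d :=
  summable_of_sum_range_le hd (sum_range_le_of_succ_le_sub ha h)

theorem tsum_le_of_succ_le_sub {a d : ℕ → ℝ} (ha : ∀ k, 0 ≤ a k) (hd : ∀ k, 0 ≤ d k)
    (h : ∀ k, a (k + 1) ≤ a k - d k) : ∑' k, d k ≤ a 0 :=
  Real.tsum_le_of_sum_range_le hd (sum_range_le_of_succ_le_sub ha h)

end Telescoping

theorem tendsto_norm_zero_of_tendsto_norm_sq_zero {ι E : Type*} [SeminormedAddGroup E]
    {l : Filter ι} {u : ι → E} (h : Tendsto (fun i => ‖u i‖ ^ 2) l (nhds 0)) :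
    Tendsto (fun i => ‖u i‖) l (nhds 0) := by
  simpa only [Real.sqrt_sq (norm_nonneg _), Real.sqrt_zero] using h.sqrt

section InnerProduct

variable {E : Type*} [SeminormedAddCommGroup E] [InnerProductSpace ℝ E] {x y z : E}

theorem norm_sub_sq_le_sub_of_inner_nonneg (h : 0 ≤ ⟪x - y, y - z⟫) :
    ‖y - z‖ ^ 2 ≤ ‖x - z‖ ^ 2 - ‖x - y‖ ^ 2 := by
  have expansion := norm_add_sq_real (x - y) (y - z)
  rw [sub_add_sub_cancel] at expansion
  linarith

theorem norm_sub_sq_le_sub_of_inner_smul_nonneg {r : ℝ} (hr : 0 < r)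
    (h : 0 ≤ ⟪r • (x - y), y - z⟫) :
    ‖y - z‖ ^ 2 ≤ ‖x - z‖ ^ 2 - ‖x - y‖ ^ 2 := by
  rw [real_inner_smul_left] at h
  exact norm_sub_sq_le_sub_of_inner_nonneg (nonneg_of_mul_nonneg_right h hr)

end InnerProduct

/-- `hminty` is the Minty variational inequality for `T` at `lamhat`; it holds at every zero of a
monotone operator. -/
theorem stmt_6_general {E : Type*} [SeminormedAddCommGroup E] [InnerProductSpace ℝ E]
    (T : E → Set E) (lamhat : E) (hminty : ∀ ⦃l y : E⦄, y ∈ T l → 0 ≤ ⟪y, l - lamhat⟫)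
    (lam : ℕ → E) (ρ : ℕ → ℝ) (hρ : ∀ k, 0 < ρ k)
    (hiter : ∀ k : ℕ, (ρ k)⁻¹ • (lam k - lam (k + 1)) ∈ T (lam (k + 1))) :
    (∀ k : ℕ, ‖lam (k + 1) - lamhat‖ ^ 2
        ≤ ‖lam k - lamhat‖ ^ 2 - ‖lam k - lam (k + 1)‖ ^ 2) ∧
    (∀ k : ℕ, ‖lam (k + 1) - lamhat‖ ≤ ‖lam k - lamhat‖) ∧
    Summable (fun k : ℕ => ‖lam k - lam (k + 1)‖ ^ 2) ∧
    (∑' k : ℕ, ‖lam k - lam (k + 1)‖ ^ 2) ≤ ‖lam 0 - lamhat‖ ^ 2 ∧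
    Tendsto (fun k : ℕ => ‖lam k - lam (k + 1)‖) atTop (nhds 0) := by
  have descent (k : ℕ) : ‖lam (k + 1) - lamhat‖ ^ 2
      ≤ ‖lam k - lamhat‖ ^ 2 - ‖lam k - lam (k + 1)‖ ^ 2 :=
    norm_sub_sq_le_sub_of_inner_smul_nonneg (inv_pos.mpr (hρ k)) (hminty (hiter k))
  have dist_sq_nonneg (k : ℕ) : 0 ≤ ‖lam k - lamhat‖ ^ 2 := sq_nonneg _
  have step_sq_nonneg (k : ℕ) : 0 ≤ ‖lam k - lam (k + 1)‖ ^ 2 := sq_nonneg _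
  have summable_step_sq := summable_of_succ_le_sub dist_sq_nonneg step_sq_nonneg descent
  exact ⟨descent,
    fun k => le_of_sq_le_sq ((descent k).trans (sub_le_self _ (step_sq_nonneg k))) (norm_nonneg _),
    summable_step_sq,
    tsum_le_of_succ_le_sub dist_sq_nonneg step_sq_nonneg descent,
    tendsto_norm_zero_of_tendsto_norm_sq_zero summable_step_sq.tendsto_atTop_zero⟩

/-- Fejér-monotonicity of the proximal-point iterates of a monotone operator
with respect to any zero `lamhat` of the operator, with square-summable successive
differences tending to zero. -/
theorem stmt_6 {H : Type*} [NormedAddCommGroup H] [InnerProductSpace ℝ H]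
    (T : H → Set H)
    (hmono : ∀ ⦃l₁ l₂ y₁ y₂ : H⦄, y₁ ∈ T l₁ → y₂ ∈ T l₂ → 0 ≤ ⟪y₁ - y₂, l₁ - l₂⟫)
    (lamhat : H) (hzero : 0 ∈ T lamhat)
    (lam : ℕ → H) (ρ : ℕ → ℝ) (hρ : ∀ k, 0 < ρ k)
    (hiter : ∀ k : ℕ, (ρ k)⁻¹ • (lam k - lam (k + 1)) ∈ T (lam (k + 1))) :
    (∀ k : ℕ, ‖lam (k + 1) - lamhat‖ ^ 2
        ≤ ‖lam k - lamhat‖ ^ 2 - ‖lam k - lam (k + 1)‖ ^ 2) ∧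
    (∀ k : ℕ, ‖lam (k + 1) - lamhat‖ ≤ ‖lam k - lamhat‖) ∧
    Summable (fun k : ℕ => ‖lam k - lam (k + 1)‖ ^ 2) ∧
    (∑' k : ℕ, ‖lam k - lam (k + 1)‖ ^ 2) ≤ ‖lam 0 - lamhat‖ ^ 2 ∧
    Tendsto (fun k : ℕ => ‖lam k - lam (k + 1)‖) atTop (nhds 0) :=
  stmt_6_general T lamhat (fun _ _ hy => by simpa only [sub_zero] using hmono hy hzero)
    lam ρ hρ hiter
end
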